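/- Suppose f : 𝕊 → ℝ is Lipschitz continuous and μ is an absolutely continuous probability measure on 𝕊 whose density is strictly positive and Lipschitz continuous. Then the laws 𝐏ⁿ_μ of the random paths t ↦ ζₙ(x,t) on C⁰([0,1],ℝ) converge weakly, as n → ∞, to the point mass (Dirac measure) at the path ζ ∈ C⁰([0,1],ℝ) given by ζ(t) = ∫₀ᵗ μ̂ₛ(f) ds. -/

import Mathlib

open MeasureTheory Filter Topology Set UniformConvergence

noncomputable section

instance : Fact ((0:ℝ) < 1) := ⟨zero_lt_one⟩

/-- The circle `𝕊 = ℝ/ℤ`. -/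
abbrev Circle1 : Type := AddCircle (1 : ℝ)

/-- A `C²` expanding circle map with expansion `≥ lam` and `‖T''‖_∞ ≤ Astar`,
encoded by a lift `F : ℝ → ℝ` satisfying `F (x+1) = F x + deg`. -/
structure CM (lam Astar : ℝ) where
  F : ℝ → ℝ
  deg : ℤ
  lift_add_one : ∀ x : ℝ, F (x + 1) = F x + deg
  contDiff : ContDiff ℝ 2 F
  expanding : ∀ x : ℝ, lam ≤ deriv F x
  second_bound : ∀ x : ℝ, |deriv (deriv F) x| ≤ Astar

namespace CM

variable {lam Astar : ℝ}

/-- The induced map on the circle. -/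
def toMap (T : CM lam Astar) : Circle1 → Circle1 :=
  fun x => (↑(T.F ((AddCircle.equivIco 1 0 x : ℝ))) : Circle1)

/-- The derivative of `T`, as a function on the circle. -/
def dmap (T : CM lam Astar) : Circle1 → ℝ :=
  fun x => deriv T.F ((AddCircle.equivIco 1 0 x : ℝ))

end CM

/-- The `C¹` distance on the space of maps. -/
def dC1 {lam Astar : ℝ} (T₁ T₂ : CM lam Astar) : ℝ :=
  (⨆ x : Circle1, dist (T₁.toMap x) (T₂.toMap x)) + (⨆ x : Circle1, |T₁.dmap x - T₂.dmap x|)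

/-- The transfer operator `ℒ_T h (x) = ∑_{T y = x} h y / T' y`. -/
def transfer {lam Astar : ℝ} (T : CM lam Astar) (h : Circle1 → ℝ) : Circle1 → ℝ :=
  fun x => ∑' y : {y : Circle1 // T.toMap y = x}, h y / T.dmap y

/-- Iterated transfer operators `ℒ_k ⋯ ℒ_1` of the sequence `T_1, T_2, …` (`Ts i = T_i`). -/
def transferIter {lam Astar : ℝ} (Ts : ℕ → CM lam Astar) : ℕ → (Circle1 → ℝ) → (Circle1 → ℝ)
  | 0, h => h
  | (k+1), h => transfer (Ts (k+1)) (transferIter Ts k h)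

/-- Composition `T_k ∘ ⋯ ∘ T_1` as circle maps. -/
def mapIter {lam Astar : ℝ} (Ts : ℕ → CM lam Astar) : ℕ → Circle1 → Circle1
  | 0 => id
  | (k+1) => (Ts (k+1)).toMap ∘ mapIter Ts k

/-- Composition of the lifts `F_k ∘ ⋯ ∘ F_1`. -/
def liftIter {lam Astar : ℝ} (Ts : ℕ → CM lam Astar) : ℕ → ℝ → ℝ
  | 0 => id
  | (k+1) => (Ts (k+1)).F ∘ liftIter Ts k

/-- A real representative of `z`. -/
def zrep (z : Circle1) : ℝ := (AddCircle.equivIco 1 0 z : ℝ)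

/-- The coordinate on the cut circle `J_z = 𝕊 ∖ {z}`. -/
def arcCoord (z x : Circle1) : ℝ := ((AddCircle.equivIoc 1 (zrep z) x : ℝ))

/-- `|x − y|_z`: the length of the subarc of `J_z` connecting `x` and `y`. -/
def arcDist (z x y : Circle1) : ℝ := |arcCoord z x - arcCoord z y|

/-- `g` is Lipschitz on `J_z = 𝕊 ∖ {z}` with constant `L`. -/
def LipOnArc (z : Circle1) (L : ℝ) (g : Circle1 → ℝ) : Prop :=
  ∀ x y : Circle1, x ≠ z → y ≠ z → |g x - g y| ≤ L * arcDist z x y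

/-- A probability density w.r.t. the Haar–Lebesgue measure `𝔪` on the circle. -/
def IsProbDensity (ψ : Circle1 → ℝ) : Prop :=
  Integrable ψ volume ∧ (∫ x : Circle1, ψ x) = 1 ∧ ∀ x, 0 ≤ ψ x

/-- The class `𝒟_L`: positive probability densities whose logarithm is Lipschitz
with constant `L` on `J_z` for some `z`. -/
def memD (L : ℝ) (ψ : Circle1 → ℝ) : Prop :=
  IsProbDensity ψ ∧ (∀ x, 0 < ψ x) ∧ ∃ z : Circle1, LipOnArc z L (fun x => Real.log (ψ x))

/-- The `L¹(𝔪)` norm. -/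
def l1norm (h : Circle1 → ℝ) : ℝ := ∫ x : Circle1, |h x|

/-- The supremum norm. -/
def supNorm (h : Circle1 → ℝ) : ℝ := ⨆ x : Circle1, |h x|

/-- The Lipschitz constant of `h` (w.r.t. the metric of the circle). -/
def lipConst (h : Circle1 → ℝ) : ℝ :=
  sInf {L : ℝ | 0 ≤ L ∧ ∀ x y : Circle1, |h x - h y| ≤ L * dist x y}

/-- The Lipschitz norm `‖h‖_Lip = Lip(h) + ‖h‖_∞`. -/
def lipNorm (h : Circle1 → ℝ) : ℝ := lipConst h + supNorm h

/-- `ρ` is the density of the SRB measure of `T`: the density of a `T`-invariant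
probability measure equivalent to `𝔪`. -/
def IsSRBDensity {lam Astar : ℝ} (T : CM lam Astar) (ρ : Circle1 → ℝ) : Prop :=
  IsProbDensity ρ ∧ (∀ᵐ x : Circle1, 0 < ρ x) ∧
    Measure.map T.toMap (volume.withDensity (fun x => ENNReal.ofReal (ρ x))) =
      volume.withDensity (fun x => ENNReal.ofReal (ρ x))

section QDS

variable {lam Astar : ℝ}

/-- `x_{n,k} = T_{n,k} ∘ ⋯ ∘ T_{n,1}` for a triangular array. -/
def arrIter (Tarr : ℕ → ℕ → CM lam Astar) (n : ℕ) : ℕ → Circle1 → Circle1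
  | 0 => id
  | (k+1) => (Tarr n (k+1)).toMap ∘ arrIter Tarr n k

/-- `ℒ_{n,k} ⋯ ℒ_{n,1}` for a triangular array. -/
def arrTransfer (Tarr : ℕ → ℕ → CM lam Astar) (n : ℕ) : ℕ → (Circle1 → ℝ) → (Circle1 → ℝ)
  | 0, h => h
  | (k+1), h => transfer (Tarr n (k+1)) (arrTransfer Tarr n k h)

/-- `f_{n,k} = f ∘ T_{n,k} ∘ ⋯ ∘ T_{n,1}` evaluated at `x`. -/
def fnk (Tarr : ℕ → ℕ → CM lam Astar) (f : Circle1 → ℝ) (n k : ℕ) (x : Circle1) : ℝ :=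
  f (arrIter Tarr n k x)

/-- `ζₙ(x,t) = n⁻¹ (∑_{k<⌊nt⌋} f_{n,k}(x) + {nt}·f_{n,⌊nt⌋}(x))`. -/
def zetaP (Tarr : ℕ → ℕ → CM lam Astar) (f : Circle1 → ℝ) (n : ℕ) (x : Circle1) (t : ℝ) : ℝ :=
  (n : ℝ)⁻¹ * ((∑ k ∈ Finset.range ⌊(n : ℝ) * t⌋₊, fnk Tarr f n k x) +
    Int.fract ((n : ℝ) * t) * fnk Tarr f n ⌊(n : ℝ) * t⌋₊ x)

/-- `ξₙ(x,t) = √n ζₙ(x,t) − √n μ(ζₙ(·,t))` for a measure `μ`. -/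
def xiP (Tarr : ℕ → ℕ → CM lam Astar) (f : Circle1 → ℝ) (μ : Measure Circle1) (n : ℕ)
    (x : Circle1) (t : ℝ) : ℝ :=
  Real.sqrt n * zetaP Tarr f n x t - Real.sqrt n * ∫ y, zetaP Tarr f n y t ∂μ

/-- The Hölder continuity (exponent `η`) of the curve `γ` on `[0,1]`, w.r.t. `d_{C¹}`. -/
def HolderCurve (η : ℝ) (γ : ℝ → CM lam Astar) : Prop :=
  ∃ H : ℝ, ∀ s ∈ Icc (0:ℝ) 1, ∀ t ∈ Icc (0:ℝ) 1, dC1 (γ s) (γ t) ≤ H * |s - t| ^ η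

/-- The convergence-rate condition `sup_n n^η sup_t d_{C¹}(T_{n,⌊nt⌋}, γ_t) < ∞`. -/
def ArrayApprox (η : ℝ) (γ : ℝ → CM lam Astar) (Tarr : ℕ → ℕ → CM lam Astar) : Prop :=
  ∃ M : ℝ, ∀ n : ℕ, 1 ≤ n → ∀ t ∈ Icc (0:ℝ) 1,
    (n : ℝ) ^ η * dC1 (Tarr n ⌊(n : ℝ) * t⌋₊) (γ t) ≤ M

end QDS

/-- The path space: functions `[0,1] → ℝ` with the topology of uniform convergence;
continuous paths (with the supremum metric) embed isometrically. -/
abbrev PathSpace : Type := (Icc (0:ℝ) 1) →ᵤ ℝ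

instance : MeasurableSpace PathSpace := borel PathSpace

/-- A function `[0,1] → ℝ` (given as a function on `ℝ`) as a point of the path space. -/
def pathOf (g : ℝ → ℝ) : PathSpace := UniformFun.ofFun (fun t => g t)

/-- Evaluation of a path at time `t` (clamped to `[0,1]`). -/
def evalPath (t : ℝ) (ω : PathSpace) : ℝ := UniformFun.toFun ω (projIcc 0 1 zero_le_one t)


section Extra

variable {lam Astar : ℝ}

/-- `μ(ζₙ(·,t))` for the measure with density `ρ` w.r.t. `𝔪`. -/
def zetaMean (Tarr : ℕ → ℕ → CM lam Astar) (f : Circle1 → ℝ) (ρ : Circle1 → ℝ)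
    (n : ℕ) (t : ℝ) : ℝ :=
  ∫ y : Circle1, zetaP Tarr f n y t * ρ y

/-- `𝔪(ζₙ(·,t))`, the mean w.r.t. the Lebesgue measure. -/
def zetaMeanM (Tarr : ℕ → ℕ → CM lam Astar) (f : Circle1 → ℝ) (n : ℕ) (t : ℝ) : ℝ :=
  ∫ y : Circle1, zetaP Tarr f n y t

/-- `ξₙ(x,t) = √n ζₙ(x,t) − √n μ(ζₙ(·,t))`, where `μ` has density `ρ`. -/
def xiD (Tarr : ℕ → ℕ → CM lam Astar) (f : Circle1 → ℝ) (ρ : Circle1 → ℝ)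
    (n : ℕ) (x : Circle1) (t : ℝ) : ℝ :=
  Real.sqrt n * zetaP Tarr f n x t - Real.sqrt n * zetaMean Tarr f ρ n t

end Extra

/-- The σ-algebra `𝔉_t` on the path space, generated by the evaluations at times `s ∈ [0,t]`. -/
def pathFiltration (t : ℝ) : MeasurableSpace PathSpace :=
  ⨆ (s : ℝ) (_ : 0 ≤ s ∧ s ≤ t), MeasurableSpace.comap (evalPath s) (borel ℝ)

/-- The process `M_t(ω) = A(ω(t)) − A(ω(0)) − ½∫₀ᵗ σ̂ₛ²·A''(ω(s)) ds`. -/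
def MGproc (σ2 : ℝ → ℝ) (A : ℝ → ℝ) (t : ℝ) (ω : PathSpace) : ℝ :=
  A (evalPath t ω) - A (evalPath 0 ω) -
    (1/2) * ∫ s in (0:ℝ)..t, σ2 s * deriv (deriv A) (evalPath s ω)

/-- `P` solves the martingale problem on `C⁰([0,1],ℝ)` for the generator `½σ̂ₜ² d²/dx²`,
started at `0`:  `P` is a probability measure, concentrated on continuous paths starting at `0`,
and for every `A ∈ C_c^∞(ℝ)` the process `MGproc σ2 A` is a `P`-martingale w.r.t. the
natural filtration `𝔉_t`.  -/
def SolvesMartingaleProblem (σ2 : ℝ → ℝ) (P : Measure PathSpace) : Prop :=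
  IsProbabilityMeasure P ∧
  P {ω : PathSpace | evalPath 0 ω = 0} = 1 ∧
  P {ω : PathSpace | Continuous (UniformFun.toFun ω)} = 1 ∧
  ∀ A : ℝ → ℝ, ContDiff ℝ (⊤ : ℕ∞) A → HasCompactSupport A →
    (∀ t ∈ Icc (0:ℝ) 1, Integrable (MGproc σ2 A t) P) ∧
    (∀ t ∈ Icc (0:ℝ) 1, @Measurable PathSpace ℝ (pathFiltration t) _ (MGproc σ2 A t)) ∧
    (∀ s ∈ Icc (0:ℝ) 1, ∀ t ∈ Icc (0:ℝ) 1, s ≤ t →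
      P[MGproc σ2 A t | pathFiltration s] =ᵐ[P] MGproc σ2 A s)

end



theorem erg_inMeasure {X : Type*} [MeasurableSpace X] {μ : Measure X} [IsProbabilityMeasure μ]
    {T : X → X} (hT : Ergodic T μ) {f : X → ℝ} (hf : MemLp f 2 μ) :
    TendstoInMeasure μ (fun N : ℕ => fun x => (N:ℝ)⁻¹ * ∑ i ∈ Finset.range N, f (T^[i] x)) atTop
      (fun _ => ∫ y, f y ∂μ) := by
  have hmp := hT.toMeasurePreserving
  set U : Lp ℝ 2 μ →ₗᵢ[ℝ] Lp ℝ 2 μ := Lp.compMeasurePreservingₗᵢ ℝ T hmp with hU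
  have hUc : ∀ v : Lp ℝ 2 μ, (U v : X → ℝ) =ᵐ[μ] v ∘ T := fun v =>
    Lp.coeFn_compMeasurePreserving v hmp
  set F0 : Lp ℝ 2 μ := hf.toLp f with hF0
  have hF0c : (F0 : X → ℝ) =ᵐ[μ] f := hf.coeFn_toLp
  have hit : ∀ i, (U^[i] F0 : X → ℝ) =ᵐ[μ] fun x => f (T^[i] x) := by
    intro i
    induction i with
    | zero => exact hF0c
    | succ i ih =>
      rw [Function.iterate_succ_apply']
      refine (hUc _).trans ?_
      have := hmp.quasiMeasurePreserving.ae_eq_comp ih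
      refine this.trans (Eventually.of_forall fun x => ?_)
      simp [Function.comp]
  set av : ℕ → Lp ℝ 2 μ := fun N => birkhoffAverage ℝ U _root_.id N F0 with hav
  have havc : ∀ N, (av N : X → ℝ) =ᵐ[μ]
      fun x => (N:ℝ)⁻¹ * ∑ i ∈ Finset.range N, f (T^[i] x) := by
    intro N
    have h1 : ∀ N : ℕ, ((∑ i ∈ Finset.range N, U^[i] F0 : Lp ℝ 2 μ) : X → ℝ) =ᵐ[μ]
        fun x => ∑ i ∈ Finset.range N, f (T^[i] x) := by
      intro N
      induction N with
      | zero =>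
        simp only [Finset.range_zero, Finset.sum_empty]
        exact Lp.coeFn_zero ℝ 2 μ
      | succ N ih =>
        simp only [Finset.sum_range_succ]
        refine (Lp.coeFn_add _ _).trans ?_
        filter_upwards [ih, hit N] with x h1 h2
        rw [Pi.add_apply, h1, h2]
    have : av N = (N:ℝ)⁻¹ • ∑ i ∈ Finset.range N, U^[i] F0 := by
      simp [hav, birkhoffAverage, birkhoffSum]
    rw [this]
    refine (Lp.coeFn_smul _ _).trans ?_
    filter_upwards [h1 N] with x hx
    rw [Pi.smul_apply, hx, smul_eq_mul]
  have hlim := ContinuousLinearMap.tendsto_birkhoffAverage_orthogonalProjection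
    U.toContinuousLinearMap U.norm_toContinuousLinearMap_le F0
  set u := (U.toContinuousLinearMap.eqLocus
    (1 : Lp ℝ 2 μ →L[ℝ] Lp ℝ 2 μ)).orthogonalProjectionOnto F0 with hu
  have hufix : U (u : Lp ℝ 2 μ) = u := u.2
  have hlim' : Tendsto av atTop (𝓝 (u : Lp ℝ 2 μ)) := hlim
  obtain ⟨c, hc⟩ := hT.ae_eq_const_of_ae_eq_comp_ae (g := (u : Lp ℝ 2 μ))
    (Lp.aestronglyMeasurable _) (by
      have := hUc u
      rw [hufix] at this
      exact this.symm)
  have hint : ∀ v : Lp ℝ 2 μ, inner ℝ (indicatorConstLp 2 MeasurableSet.univ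
      (measure_ne_top μ _) (1:ℝ)) v = ∫ x, v x ∂μ := by
    intro v
    rw [L2.inner_indicatorConstLp_one, Measure.restrict_univ]
  have hci : Tendsto (fun N => ∫ x, av N x ∂μ) atTop (𝓝 c) := by
    have h1 : Tendsto (fun N => inner ℝ (indicatorConstLp 2 MeasurableSet.univ
      (measure_ne_top μ _) (1:ℝ)) (av N)) atTop (𝓝 (inner ℝ (indicatorConstLp 2 MeasurableSet.univ
      (measure_ne_top μ _) (1:ℝ)) (u : Lp ℝ 2 μ))) := tendsto_const_nhds.inner hlim'
    simp only [hint] at h1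
    rwa [integral_congr_ae hc, show (∫ a, Function.const X c a ∂μ) = c by simp] at h1
  have hci2 : ∀ᶠ N : ℕ in atTop, ∫ x, av N x ∂μ = ∫ x, f x ∂μ := by
    filter_upwards [eventually_ge_atTop 1] with N hN
    rw [integral_congr_ae (havc N), integral_const_mul, integral_finsetSum]
    · have : ∀ i ∈ Finset.range N, ∫ x, f (T^[i] x) ∂μ = ∫ x, f x ∂μ := by
        intro i _
        have hm := hmp.iterate i
        rw [← integral_map hm.measurable.aemeasurable (f := f), hm.map_eq]
        rw [hm.map_eq]; exact hf.1
      rw [Finset.sum_congr rfl this]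
      have : (N:ℝ) ≠ 0 := by positivity
      simp [this]
    · intro i _
      have hm := hmp.iterate i
      exact (hm.integrable_comp hf.1).2 (hf.integrable (by norm_num))
  have hcc : c = ∫ x, f x ∂μ :=
    tendsto_nhds_unique hci (tendsto_const_nhds.congr' (hci2.mono fun _ h => h.symm))
  have := tendstoInMeasure_of_tendsto_Lp hlim'
  refine this.congr' (Eventually.of_forall havc) ?_
  rw [← hcc]; exact hc

theorem erg_L1 {X : Type*} [MeasurableSpace X] {μ m : Measure X} [IsProbabilityMeasure μ]
    [IsProbabilityMeasure m] (hm : m ≪ μ)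
    {T : X → X} (hT : Ergodic T μ) {f : X → ℝ} (hf : Measurable f) {B : ℝ}
    (hB : ∀ x, |f x| ≤ B) :
    Tendsto (fun N : ℕ => ∫ x, |(N:ℝ)⁻¹ * ∑ i ∈ Finset.range N, f (T^[i] x) - ∫ y, f y ∂μ| ∂m)
      atTop (𝓝 0) := by
  have hTm := hT.toMeasurePreserving.measurable
  have hmeas : ∀ N : ℕ, Measurable
      (fun x => (N:ℝ)⁻¹ * ∑ i ∈ Finset.range N, f (T^[i] x)) := by
    intro N
    refine Measurable.const_mul (Finset.measurable_fun_sum _ fun i _ => ?_) _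
    exact hf.comp (hTm.iterate i)
  have hL : MemLp f 2 μ := MemLp.of_bound hf.aestronglyMeasurable B (Eventually.of_forall hB)
  have h0 := erg_inMeasure hT hL
  have hbd : ∀ (N : ℕ) x, |(N:ℝ)⁻¹ * ∑ i ∈ Finset.range N, f (T^[i] x)| ≤ B := by
    intro N x
    rcases Nat.eq_zero_or_pos N with rfl | hN
    · simpa using (abs_nonneg _).trans (hB x)
    rw [abs_mul, abs_of_nonneg (by positivity : (0:ℝ) ≤ (N:ℝ)⁻¹), inv_mul_le_iff₀ (by positivity)]
    refine (Finset.abs_sum_le_sum_abs _ _).trans ?_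
    refine (Finset.sum_le_sum fun i _ => hB _).trans (by simp)
  refine tendsto_of_subseq_tendsto fun ns hns => ?_
  obtain ⟨ms, hms, hae⟩ := (h0.comp hns).exists_seq_tendsto_ae
  refine ⟨ms, ?_⟩
  have hae' := hm.ae_le hae
  have := tendsto_integral_of_dominated_convergence (μ := m)
    (F := fun (k : ℕ) x => |((ns (ms k) : ℕ):ℝ)⁻¹ * ∑ i ∈ Finset.range (ns (ms k)), f (T^[i] x)
      - ∫ y, f y ∂μ|) (f := fun _ => 0) (fun _ => B + |∫ y, f y ∂μ|)
    (fun k => (((hmeas _).sub_const _).abs).aestronglyMeasurable) (integrable_const _)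
    (fun k => Eventually.of_forall fun x => by
      rw [Real.norm_eq_abs, abs_abs]
      exact (abs_sub _ _).trans (add_le_add_left (hbd _ x) _))
    (by
      filter_upwards [hae'] with x hx
      have := (hx.sub_const (∫ y, f y ∂μ)).abs
      simpa using this)
  simpa using this
theorem CM.F_add_int {lam Astar : ℝ} (T : CM lam Astar) (n : ℤ) (x : ℝ) :
    T.F (x + n) = T.F x + T.deg * n := by
  have hnat : ∀ (n : ℕ) x, T.F (x + n) = T.F x + T.deg * n := by
    intro n
    induction n with
    | zero => intro x; simp
    | succ n ih => intro x; push_cast; rw [← add_assoc, T.lift_add_one, ih]; ring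
  obtain ⟨k, rfl | rfl⟩ := n.eq_nat_or_neg
  · exact_mod_cast hnat k x
  · have := hnat k (x + (-(k:ℤ) : ℤ))
    push_cast at this ⊢
    rw [show x + -(k:ℝ) + k = x by ring] at this
    linarith

/-- distortion data for a lift -/
structure GoodLift (κ c : ℝ) (G G' : ℝ → ℝ) : Prop where
  hd : ∀ x, HasDerivAt G (G' x) x
  one_le : ∀ x, 1 ≤ G' x
  c_le : ∀ x, c ≤ G' x
  dist : ∀ x y, G' x ≤ G' y * Real.exp (κ * |G x - G y|)
  per : ∃ D : ℤ, ∀ x, G (x + 1) = G x + D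

theorem GoodLift.mono {κ c : ℝ} {G G' : ℝ → ℝ} (h : GoodLift κ c G G') : StrictMono G :=
  strictMono_of_hasDerivAt_pos h.hd fun x => zero_lt_one.trans_le (h.one_le x)

theorem GoodLift.cont {κ c : ℝ} {G G' : ℝ → ℝ} (h : GoodLift κ c G G') : Continuous G :=
  continuous_iff_continuousAt.2 fun x => (h.hd x).continuousAt

theorem goodLift_id {κ : ℝ} (hκ : 0 ≤ κ) : GoodLift κ 1 id (fun _ => 1) where
  hd x := hasDerivAt_id x
  one_le x := le_rfl
  c_le x := le_rfl
  dist x y := by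
    rw [one_mul]; exact Real.one_le_exp (by positivity)
  per := ⟨1, fun x => by simp⟩

theorem GoodLift.comp {lam Astar κ c : ℝ} (hlam : 1 < lam) (hA : 0 < Astar)
    (hκ : κ = Astar / (lam * (lam - 1)))
    {G G' : ℝ → ℝ} (h : GoodLift κ c G G') (hc : 0 ≤ c) (T : CM lam Astar) :
    GoodLift κ (lam * c) (T.F ∘ G) (fun x => deriv T.F (G x) * G' x) := by
  have hdF : ∀ x, HasDerivAt T.F (deriv T.F x) x := fun x =>
    (T.contDiff.differentiable (by norm_num) x).hasDerivAt
  have hdF' : Differentiable ℝ (deriv T.F) := by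
    have h2 : ContDiff ℝ (1 + 1) T.F := by
      have := T.contDiff
      norm_num
      exact this
    exact ((contDiff_succ_iff_deriv.1 h2).2.2).differentiable (by norm_num)
  have hlip : ∀ u v, |deriv T.F u - deriv T.F v| ≤ Astar * |u - v| := by
    intro u v
    have := Convex.norm_image_sub_le_of_norm_deriv_le (f := deriv T.F) (s := univ) (x := v) (y := u)
      (C := Astar) (fun x _ => hdF' x) (fun x _ => T.second_bound x) convex_univ trivial trivial
    simpa using this
  have hexp : ∀ u v, lam * |u - v| ≤ |T.F u - T.F v| := by
    have key : ∀ u v, u ≤ v → lam * (v - u) ≤ T.F v - T.F u := by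
      intro u v huv
      exact convex_univ.mul_sub_le_image_sub_of_le_deriv
        (fun x _ => (hdF x).continuousAt.continuousWithinAt)
        (fun x _ => (hdF x).differentiableAt.differentiableWithinAt)
        (fun x _ => T.expanding x) u trivial v trivial huv
    intro u v
    rcases le_total u v with huv | huv
    · rw [abs_sub_comm u v, abs_sub_comm (T.F u), abs_of_nonneg (sub_nonneg.2 huv)]
      exact (key u v huv).trans (le_abs_self _)
    · rw [abs_of_nonneg (sub_nonneg.2 huv)]
      exact (key v u huv).trans (le_abs_self _)
  have hl0 : 0 < lam := by linarith
  refine ⟨fun x => ?_, fun x => ?_, fun x => ?_, fun x y => ?_, ?_⟩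
  · exact (hdF (G x)).comp x (h.hd x)
  · have h1 := T.expanding (G x)
    have h2 := h.one_le x
    nlinarith
  · exact mul_le_mul (T.expanding _) (h.c_le x) hc (hl0.le.trans (T.expanding _))
  · set δ := |G x - G y| with hδ
    have hδ0 : 0 ≤ δ := abs_nonneg _
    have h1 : deriv T.F (G x) ≤ deriv T.F (G y) * Real.exp (Astar / lam * δ) := by
      have e1 := (abs_le.1 (hlip (G x) (G y))).2
      have e2 := T.expanding (G y)
      have e3 : Astar * δ ≤ deriv T.F (G y) * (Astar / lam * δ) := by
        have : Astar * δ = lam * (Astar / lam * δ) := by field_simp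
        rw [this]
        exact mul_le_mul_of_nonneg_right e2 (by positivity)
      have e4 := Real.add_one_le_exp (Astar / lam * δ)
      have e5 := mul_le_mul_of_nonneg_left e4 (hl0.le.trans e2)
      linarith
    have h2 := h.dist x y
    have h3 : Astar / lam * δ + κ * δ ≤ κ * |T.F (G x) - T.F (G y)| := by
      have hk : 0 ≤ κ := by
        rw [hκ]; have : 0 < lam - 1 := by linarith
        positivity
      have e := mul_le_mul_of_nonneg_left (hexp (G x) (G y)) hk
      have : Astar / lam * δ + κ * δ = κ * (lam * δ) := by
        rw [hκ]; have : lam - 1 ≠ 0 := by linarith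
        field_simp; ring
      rw [this]; exact e
    have hp : 0 ≤ G' x := zero_le_one.trans (h.one_le x)
    have hq : 0 ≤ deriv T.F (G y) := hl0.le.trans (T.expanding _)
    calc deriv T.F (G x) * G' x
        ≤ (deriv T.F (G y) * Real.exp (Astar / lam * δ)) * (G' y * Real.exp (κ * δ)) :=
          mul_le_mul h1 h2 hp (by positivity)
      _ = deriv T.F (G y) * G' y * Real.exp (Astar / lam * δ + κ * δ) := by
          rw [Real.exp_add]; ring
      _ ≤ _ := by
          have hp' : 0 ≤ G' y := zero_le_one.trans (h.one_le y)
          refine mul_le_mul_of_nonneg_left (Real.exp_le_exp.2 h3) (by positivity)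
  · obtain ⟨D, hD⟩ := h.per
    refine ⟨T.deg * D, fun x => ?_⟩
    simp only [Function.comp, hD, T.F_add_int]; push_cast; ring

theorem GoodLift.deg_pos {κ c : ℝ} {G G' : ℝ → ℝ} (h : GoodLift κ c G G') :
    ∃ D : ℕ, 1 ≤ D ∧ ∀ x, G (x + 1) = G x + D := by
  obtain ⟨D, hD⟩ := h.per
  have h1 := h.mono (show (0:ℝ) < 0 + 1 by norm_num)
  rw [hD] at h1
  have h2 : (0:ℝ) < D := by linarith
  have h3 : 0 < D := by exact_mod_cast h2
  refine ⟨D.toNat, by omega, fun x => ?_⟩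
  rw [hD]
  congr 1
  have : ((D.toNat : ℤ) : ℝ) = D := by rw [Int.toNat_of_nonneg h3.le]
  exact_mod_cast this.symm

theorem GoodLift.piece {κ c : ℝ} (hκ : 0 ≤ κ) {G G' : ℝ → ℝ} (h : GoodLift κ c G G') {p q : ℝ}
    (hpq : G q = G p + 1) (φ : Circle1 → ENNReal) :
    p < q ∧ c * (q - p) ≤ 1 ∧
    (∫⁻ x in Ioc p q, φ (G x : Circle1)) ≤
      ENNReal.ofReal (Real.exp κ * (q - p)) * ∫⁻ y, φ y ∧
    ENNReal.ofReal (Real.exp (-κ) * (q - p)) * (∫⁻ y, φ y) ≤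
      ∫⁻ x in Ioc p q, φ (G x : Circle1) := by
  have hlt : p < q := h.mono.lt_iff_lt.1 (by linarith)
  have hqp : 0 < q - p := sub_pos.2 hlt
  obtain ⟨ξ, hξ, hξ'⟩ := exists_hasDerivAt_eq_slope G G' hlt h.cont.continuousOn
    (fun x _ => h.hd x)
  have hξ1 : G' ξ = 1 / (q - p) := by rw [hξ', hpq]; ring
  have himg : G '' Ioc p q = Ioc (G p) (G p + 1) := by
    ext y; constructor
    · rintro ⟨x, hx, rfl⟩
      exact ⟨h.mono hx.1, hpq ▸ h.mono.monotone hx.2⟩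
    · rintro ⟨h1, h2⟩
      obtain ⟨x, hx, rfl⟩ := intermediate_value_Icc hlt.le h.cont.continuousOn
        (show y ∈ Icc (G p) (G q) from ⟨h1.le, hpq ▸ h2⟩)
      exact ⟨x, ⟨h.mono.lt_iff_lt.1 h1, hx.2⟩, rfl⟩
  have hcv := lintegral_image_eq_lintegral_abs_deriv_mul (s := Ioc p q) measurableSet_Ioc
    (fun x _ => (h.hd x).hasDerivWithinAt) h.mono.injective.injOn (fun y => φ (y : Circle1))
  rw [himg, AddCircle.lintegral_preimage 1 (G p) φ] at hcv
  have hdst : ∀ x ∈ Ioc p q, |G x - G ξ| ≤ 1 := by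
    intro x hx
    have a1 := h.mono.monotone hx.1.le
    have a2 := h.mono.monotone hx.2
    have a3 := h.mono.monotone hξ.1.le
    have a4 := h.mono.monotone hξ.2.le
    rw [abs_le]; constructor <;> linarith
  refine ⟨hlt, ?_, ?_, ?_⟩
  · have := h.c_le ξ
    rw [hξ1, le_div_iff₀ hqp] at this
    exact this
  · rw [hcv, ← lintegral_const_mul' _ _ ENNReal.ofReal_ne_top]
    refine setLIntegral_mono' measurableSet_Ioc fun x hx => ?_
    rw [← mul_assoc, ← ENNReal.ofReal_mul (by positivity)]
    refine le_mul_of_one_le_left zero_le ?_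
    rw [ENNReal.one_le_ofReal]
    have h1 := h.dist ξ x
    have h2 : Real.exp (κ * |G ξ - G x|) ≤ Real.exp κ := by
      apply Real.exp_le_exp.2
      rw [abs_sub_comm]
      exact mul_le_of_le_one_right hκ (hdst x hx)
    have h3 : 0 ≤ G' x := zero_le_one.trans (h.one_le x)
    rw [hξ1, div_le_iff₀ hqp] at h1
    rw [abs_of_nonneg h3]
    nlinarith [mul_le_mul_of_nonneg_left h2 (mul_nonneg h3 hqp.le)]
  · rw [hcv, ← lintegral_const_mul' _ _ ENNReal.ofReal_ne_top]
    refine setLIntegral_mono' measurableSet_Ioc fun x hx => ?_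
    rw [← mul_assoc, ← ENNReal.ofReal_mul (by positivity)]
    refine mul_le_of_le_one_left zero_le ?_
    rw [ENNReal.ofReal_le_one]
    have h1 := h.dist x ξ
    have h2 : Real.exp (κ * |G x - G ξ|) ≤ Real.exp κ := by
      apply Real.exp_le_exp.2
      exact mul_le_of_le_one_right hκ (hdst x hx)
    have h3 : 0 ≤ G' x := zero_le_one.trans (h.one_le x)
    rw [abs_of_nonneg h3]
    have h4 : G' x * (q - p) ≤ Real.exp κ := by
      rw [hξ1] at h1
      calc G' x * (q - p) ≤ (1 / (q - p) * Real.exp κ) * (q - p) := by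
            refine mul_le_mul_of_nonneg_right (h1.trans ?_) hqp.le
            exact mul_le_mul_of_nonneg_left h2 (by positivity)
        _ = _ := by field_simp
    calc Real.exp (-κ) * (q - p) * G' x = Real.exp (-κ) * (G' x * (q - p)) := by ring
      _ ≤ Real.exp (-κ) * Real.exp κ := mul_le_mul_of_nonneg_left h4 (Real.exp_pos _).le
      _ = 1 := by rw [← Real.exp_add]; simp

theorem GoodLift.push {κ c : ℝ} (hκ : 0 ≤ κ) {G G' : ℝ → ℝ} (h : GoodLift κ c G G')
    {S : Circle1 → Circle1} (hS : ∀ x : ℝ, S x = (G x : Circle1)) (φ : Circle1 → ENNReal) :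
    ∫⁻ y, φ (S y) ≤ ENNReal.ofReal (Real.exp κ) * ∫⁻ y, φ y := by
  have key : ∀ (d : ℕ) (p : ℝ), 0 ≤ p → G p = G 0 + d →
      ∫⁻ x in Ioc 0 p, φ (G x : Circle1) ≤ ENNReal.ofReal (Real.exp κ * p) * ∫⁻ y, φ y := by
    intro d
    induction d with
    | zero =>
      intro p _ hp
      have : p = 0 := h.mono.injective (by simpa using hp)
      subst this; simp
    | succ d ih =>
      intro p hp0 hp
      push_cast at hp
      obtain ⟨p', hp', hpe⟩ := intermediate_value_Icc hp0 h.cont.continuousOn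
        (show G 0 + d ∈ Icc (G 0) (G p) from ⟨by simp, by rw [hp]; linarith⟩)
      have h1 := ih p' hp'.1 hpe
      obtain ⟨_, -, h2, -⟩ := h.piece hκ (p := p') (q := p) (by rw [hp, hpe]; ring) φ
      rw [← Ioc_union_Ioc_eq_Ioc hp'.1 hp'.2]
      refine (lintegral_union_le _ _ _).trans ((add_le_add h1 h2).trans ?_)
      rw [← add_mul, ← ENNReal.ofReal_add (mul_nonneg (Real.exp_pos _).le hp'.1)
        (mul_nonneg (Real.exp_pos _).le (sub_nonneg.2 hp'.2))]
      apply le_of_eq; congr 2; ring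
  obtain ⟨D, hD1, hD⟩ := h.deg_pos
  have := key D 1 zero_le_one (by simpa using hD 0)
  rw [← AddCircle.lintegral_preimage 1 0 (fun y => φ (S y))]
  simpa [hS] using this

theorem GoodLift.exists_step {κ c : ℝ} {G G' : ℝ → ℝ} (h : GoodLift κ c G G') (x : ℝ) :
    ∃ q, G q = G x + 1 := by
  obtain ⟨D, hD1, hD⟩ := h.deg_pos
  have hD1' : (1:ℝ) ≤ D := by exact_mod_cast hD1
  obtain ⟨q, _, hq⟩ := intermediate_value_Icc (show x ≤ x + 1 by linarith) h.cont.continuousOn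
    (show G x + 1 ∈ Icc (G x) (G (x+1)) from ⟨by linarith, by rw [hD]; linarith⟩)
  exact ⟨q, hq⟩

theorem CM.toMap_coe {lam Astar : ℝ} (T : CM lam Astar) (x : ℝ) :
    T.toMap (x : Circle1) = (T.F x : Circle1) := by
  unfold CM.toMap
  rw [AddCircle.coe_equivIco_mk_apply]
  have h := T.F_add_int ⌊x⌋ (Int.fract x)
  rw [Int.fract_add_floor] at h
  rw [h]
  have : ((T.deg * (⌊x⌋:ℝ) : ℝ) : Circle1) = 0 := by
    rw [AddCircle.coe_eq_zero_iff]
    exact ⟨T.deg * ⌊x⌋, by simp⟩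
  rw [AddCircle.coe_add, this]
  simp

theorem CM.cont {lam Astar : ℝ} (T : CM lam Astar) : Continuous T.toMap := by
  have hq : IsQuotientMap ((↑) : ℝ → Circle1) := isQuotientMap_quotient_mk'
  rw [hq.continuous_iff]
  have : T.toMap ∘ ((↑) : ℝ → Circle1) = fun x => (T.F x : Circle1) := funext T.toMap_coe
  rw [this]
  exact (AddCircle.continuous_mk' 1).comp T.contDiff.continuous

theorem arr_good {lam Astar κ : ℝ} (hlam : 1 < lam) (hA : 0 < Astar)
    (hκ : κ = Astar / (lam * (lam - 1))) (Tarr : ℕ → ℕ → CM lam Astar) (n k : ℕ) :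
    ∃ G G', GoodLift κ (lam ^ k) G G' ∧ ∀ x : ℝ, arrIter Tarr n k x = (G x : Circle1) := by
  have hk : 0 ≤ κ := by
    rw [hκ]; have : 0 < lam - 1 := by linarith
    positivity
  induction k with
  | zero => exact ⟨id, fun _ => 1, by rw [pow_zero]; exact goodLift_id hk, fun x => rfl⟩
  | succ k ih =>
    obtain ⟨G, G', hG, hx⟩ := ih
    refine ⟨_, _, by
      rw [pow_succ']
      exact hG.comp hlam hA hκ (by positivity) (Tarr n (k+1)), fun x => ?_⟩
    simp [arrIter, hx, CM.toMap_coe]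

theorem iter_arr {lam Astar : ℝ} (T : CM lam Astar) (k : ℕ) :
    arrIter (fun _ _ => T) 0 k = T.toMap^[k] := by
  induction k with
  | zero => rfl
  | succ k ih => rw [arrIter, ih, Function.iterate_succ']

theorem preErgodic_toMap {lam Astar : ℝ} (hlam : 1 < lam) (hA : 0 < Astar) (T : CM lam Astar) :
    PreErgodic T.toMap (volume : Measure Circle1) := by
  obtain ⟨κ, hκ⟩ : ∃ κ, κ = Astar / (lam * (lam - 1)) := ⟨_, rfl⟩
  have hk : 0 ≤ κ := by
    rw [hκ]; have : 0 < lam - 1 := by linarith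
    positivity
  refine ⟨fun s hs hinv => ?_⟩
  have hinvk : ∀ k, T.toMap^[k] ⁻¹' s = s := by
    intro k
    induction k with
    | zero => rfl
    | succ k ih => rw [Function.iterate_succ, preimage_comp, ih, hinv]
  rw [eventuallyConst_set']
  by_contra hcon
  push Not at hcon
  obtain ⟨h1, h2⟩ := hcon
  have h1' : volume s ≠ 0 := fun h => h1 (ae_eq_empty.2 h)
  have h2' : volume sᶜ ≠ 0 := fun h => h2 (ae_eq_univ.2 h)
  set S : Set ℝ := ((↑) : ℝ → Circle1) ⁻¹' s with hS
  have hSm : MeasurableSet S := AddCircle.measurable_mk' hs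
  have h3 : volume Sᶜ ≠ 0 := by
    intro h
    apply h2'
    have := (AddCircle.measurePreserving_mk 1 0).measure_preimage hs.compl.nullMeasurableSet
    rw [← this]
    exact le_antisymm ((Measure.restrict_apply_le _ _).trans h.le) zero_le
  have hae := IsUnifLocDoublingMeasure.ae_tendsto_measure_inter_div (volume : Measure ℝ) Sᶜ 1
  have hne : (ae (volume.restrict Sᶜ)).NeBot := by
    rw [ae_neBot]; intro h
    exact h3 (Measure.restrict_eq_zero.1 h)
  obtain ⟨x, hx⟩ := hae.exists
  have hG : ∀ k : ℕ, ∃ q, x < q ∧ lam ^ k * (q - x) ≤ 1 ∧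
      ENNReal.ofReal (Real.exp (-κ) * (q - x)) * volume s ≤ volume (S ∩ Icc x q) := by
    intro k
    obtain ⟨G, G', hG, hGx⟩ := arr_good hlam hA hκ (fun _ _ => T) 0 k
    obtain ⟨q, hq⟩ := hG.exists_step x
    obtain ⟨a1, a2, -, a3⟩ := hG.piece hk hq (s.indicator 1)
    refine ⟨q, a1, a2, ?_⟩
    rw [lintegral_indicator_one hs] at a3
    refine a3.trans ?_
    have : ∀ y : ℝ, s.indicator (1 : Circle1 → ENNReal) (G y : Circle1) = S.indicator 1 y := by
      intro y
      have e : ((G y : Circle1) ∈ s) ↔ y ∈ S := by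
        rw [← hGx, iter_arr]
        change (y : Circle1) ∈ T.toMap^[k] ⁻¹' s ↔ _
        rw [hinvk]; rfl
      by_cases hy : y ∈ S
      · rw [indicator_of_mem hy, indicator_of_mem (e.2 hy)]; rfl
      · rw [indicator_of_notMem hy, indicator_of_notMem (fun h => hy (e.1 h))]
    simp only [this]
    rw [lintegral_indicator_one hSm, Measure.restrict_apply hSm]
    exact measure_mono (inter_subset_inter_right _ Ioc_subset_Icc_self)
  choose q hq1 hq2 hq3 using hG
  have hball : ∀ k, Metric.closedBall ((x + q k) / 2) ((q k - x) / 2) = Icc x (q k) := by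
    intro k
    rw [Real.closedBall_eq_Icc]; congr 1 <;> ring
  have hlim := hx (l := atTop) (fun k => (x + q k) / 2) (fun k => (q k - x) / 2) (by
    rw [tendsto_nhdsWithin_iff]
    constructor
    · have : Tendsto (fun k : ℕ => (lam⁻¹) ^ k) atTop (𝓝 0) :=
        tendsto_pow_atTop_nhds_zero_of_lt_one (by positivity) (inv_lt_one_of_one_lt₀ hlam)
      refine squeeze_zero (fun k => ?_) (fun k => ?_) this
      · linarith [hq1 k]
      · have hp : 0 < lam ^ k := by positivity
        have : q k - x ≤ (lam⁻¹)^k := by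
          rw [inv_pow, ← one_div, le_div_iff₀ hp]; linarith [hq2 k]
        linarith [hq1 k]
    · exact Eventually.of_forall fun k => by
        have := hq1 k
        simp only [mem_Ioi]; linarith) (Eventually.of_forall fun k => by
      rw [one_mul, hball]; exact ⟨le_rfl, (hq1 k).le⟩)
  simp only [hball, Real.volume_Icc] at hlim
  set c : ENNReal := ENNReal.ofReal (Real.exp (-κ)) * volume s with hc
  have hc0 : c ≠ 0 := by
    rw [hc]; refine mul_ne_zero ?_ h1'
    simpa using Real.exp_pos _
  have hbd : ∀ k, volume (Sᶜ ∩ Icc x (q k)) / ENNReal.ofReal (q k - x) + c ≤ 1 := by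
    intro k
    have hp : 0 < q k - x := sub_pos.2 (hq1 k)
    have hp0 : ENNReal.ofReal (q k - x) ≠ 0 := by simpa using hp
    have e := measure_inter_add_sdiff (μ := volume) (Icc x (q k)) hSm
    rw [Real.volume_Icc] at e
    have e2 : Icc x (q k) \ S = Sᶜ ∩ Icc x (q k) := by rw [inter_comm]; rfl
    rw [e2, inter_comm] at e
    have e3 := hq3 k
    rw [ENNReal.ofReal_mul (Real.exp_pos _).le] at e3
    have e4 : c ≤ volume (S ∩ Icc x (q k)) / ENNReal.ofReal (q k - x) := by
      rw [ENNReal.le_div_iff_mul_le (Or.inl hp0) (Or.inl ENNReal.ofReal_ne_top)]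
      rw [hc, mul_right_comm]; exact e3
    calc _ ≤ volume (Sᶜ ∩ Icc x (q k)) / ENNReal.ofReal (q k - x)
            + volume (S ∩ Icc x (q k)) / ENNReal.ofReal (q k - x) := by gcongr
      _ = 1 := by
        rw [← ENNReal.add_div, add_comm, e, ENNReal.div_self hp0 ENNReal.ofReal_ne_top]
  have hfin := le_of_tendsto' (hlim.add_const c) hbd
  have : c ≤ 0 := by
    have h5 : 1 + c ≤ 1 + 0 := by simpa using hfin
    exact (ENNReal.add_le_add_iff_left ENNReal.one_ne_top).1 h5
  exact hc0 (le_antisymm this zero_le)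

theorem srb_L1 {lam Astar : ℝ} (hlam : 1 < lam) (hA : 0 < Astar) (T : CM lam Astar)
    {ρ : Circle1 → ℝ} (hρ : IsSRBDensity T ρ) {f : Circle1 → ℝ} (hf : Continuous f) {B : ℝ}
    (hB : ∀ x, |f x| ≤ B) :
    Tendsto (fun N : ℕ => ∫ x : Circle1, |(N:ℝ)⁻¹ * ∑ i ∈ Finset.range N, f (T.toMap^[i] x)
      - ∫ y, f y * ρ y|) atTop (𝓝 0) := by
  obtain ⟨⟨hi, h1, h0⟩, hpos, hinv⟩ := hρ
  set μ : Measure Circle1 := volume.withDensity (fun x => ENNReal.ofReal (ρ x)) with hμ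
  have hac : μ ≪ volume := withDensity_absolutelyContinuous _ _
  have hac' : volume ≪ μ := by
    refine withDensity_absolutelyContinuous' hi.aemeasurable.ennreal_ofReal ?_
    filter_upwards [hpos] with x hx
    simpa using hx
  have hprob : IsProbabilityMeasure μ := by
    constructor
    rw [hμ, withDensity_apply _ MeasurableSet.univ, Measure.restrict_univ,
      ← ofReal_integral_eq_lintegral_ofReal hi (Eventually.of_forall h0), h1]
    simp
  have hpv : IsProbabilityMeasure (volume : Measure Circle1) := by
    constructor; simp
  have hpe := preErgodic_toMap hlam hA T
  have herg : Ergodic T.toMap μ :=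
    { measurable := T.cont.measurable
      map_eq := hinv
      aeconst_set := fun s hs hs' => (hpe.aeconst_set hs hs').anti hac.ae_le }
  have hfi : ∫ y, f y ∂μ = ∫ y, f y * ρ y := by
    rw [hμ, integral_withDensity_eq_integral_toReal_smul₀ hi.aemeasurable.ennreal_ofReal
      (Eventually.of_forall fun x => ENNReal.ofReal_lt_top)]
    refine integral_congr_ae (Eventually.of_forall fun x => ?_)
    simp [ENNReal.toReal_ofReal (h0 x), mul_comm]
  rw [← hfi]
  exact erg_L1 hac' herg hf.measurable hB
theorem riemann_unif {g : ℝ → ℝ} (hg : UniformContinuous g) {B : ℝ} (hB : ∀ x, |g x| ≤ B)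
    {ε : ℝ} (hε : 0 < ε) :
    ∀ᶠ n : ℕ in atTop, ∀ t ∈ Icc (0:ℝ) 1,
      |(n:ℝ)⁻¹ * ∑ k ∈ Finset.range ⌊(n:ℝ) * t⌋₊, g (k / n) - ∫ s in (0:ℝ)..t, g s| ≤ ε := by
  have hB0 : 0 ≤ B := (abs_nonneg _).trans (hB 0)
  obtain ⟨δ, hδ, hgδ⟩ := Metric.uniformContinuous_iff.1 hg (ε/2) (by positivity)
  have e1 : ∀ᶠ n : ℕ in atTop, (1:ℝ) / n < δ :=
    (tendsto_order.1 tendsto_one_div_atTop_nhds_zero_nat).2 _ hδ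
  have e2 : ∀ᶠ n : ℕ in atTop, B / n < ε / 2 :=
    (tendsto_order.1 (tendsto_const_div_atTop_nhds_zero_nat B)).2 _ (by positivity)
  filter_upwards [e1, e2, eventually_ge_atTop 1] with n h1 h2 hn t ht
  have hn0 : (0:ℝ) < n := by exact_mod_cast hn
  set m := ⌊(n:ℝ) * t⌋₊ with hm
  have hnt : 0 ≤ (n:ℝ) * t := mul_nonneg hn0.le ht.1
  have hm1 : (m:ℝ) ≤ n * t := Nat.floor_le hnt
  have hm2 : n * t < m + 1 := Nat.lt_floor_add_one _
  have hii : ∀ a b, IntervalIntegrable g volume a b := fun a b =>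
    hg.continuous.intervalIntegrable a b
  have hsum : ∑ k ∈ Finset.range m, ∫ s in ((k:ℕ):ℝ)/n..((k+1:ℕ):ℝ)/n, g s
      = ∫ s in (0:ℝ)..(m:ℝ)/n, g s := by
    have := intervalIntegral.sum_integral_adjacent_intervals (f := g) (μ := volume)
      (a := fun k : ℕ => (k:ℝ)/n) (n := m) (fun k _ => hii _ _)
    simpa using this
  have hterm : ∀ k ∈ Finset.range m, |(n:ℝ)⁻¹ * g (k/n) - ∫ s in ((k:ℕ):ℝ)/n..((k+1:ℕ):ℝ)/n, g s|
      ≤ ε / 2 * (n:ℝ)⁻¹ := by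
    intro k _
    have hlen : ((k+1:ℕ):ℝ)/n - (k:ℝ)/n = (n:ℝ)⁻¹ := by push_cast; field_simp; ring
    have : (n:ℝ)⁻¹ * g (k/n) = ∫ s in ((k:ℕ):ℝ)/n..((k+1:ℕ):ℝ)/n, g (k/n) := by
      rw [intervalIntegral.integral_const, hlen, smul_eq_mul]
    rw [this, ← intervalIntegral.integral_sub (by simp) (hii _ _)]
    have := intervalIntegral.norm_integral_le_of_norm_le_const (C := ε/2)
      (f := fun s => g (k/n) - g s) (a := ((k:ℕ):ℝ)/n) (b := ((k+1:ℕ):ℝ)/n) (fun s hs => by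
        have hle : ((k:ℕ):ℝ)/n ≤ ((k+1:ℕ):ℝ)/n := by
          have : 0 < (n:ℝ)⁻¹ := by positivity
          linarith
        rw [uIoc_of_le hle] at hs
        have := hgδ (a := (k:ℝ)/n) (b := s) (by
          rw [dist_comm, Real.dist_eq, abs_of_nonneg (by linarith [hs.1])]
          rw [one_div] at h1
          linarith [hs.2])
        exact this.le)
    rw [hlen, abs_of_nonneg (by positivity : (0:ℝ) ≤ (n:ℝ)⁻¹)] at this
    exact this
  have hA : |(n:ℝ)⁻¹ * ∑ k ∈ Finset.range m, g (k / n) - ∫ s in (0:ℝ)..(m:ℝ)/n, g s| ≤ ε / 2 := by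
    rw [← hsum, Finset.mul_sum, ← Finset.sum_sub_distrib]
    refine (Finset.abs_sum_le_sum_abs _ _).trans ((Finset.sum_le_sum hterm).trans ?_)
    rw [Finset.sum_const, Finset.card_range, nsmul_eq_mul]
    have : (m:ℝ) * (n:ℝ)⁻¹ ≤ 1 := by
      rw [mul_inv_le_iff₀ hn0]; nlinarith [ht.2]
    nlinarith
  have hBt : |∫ s in ((m:ℝ)/n)..t, g s| ≤ ε / 2 := by
    have := intervalIntegral.norm_integral_le_of_norm_le_const (C := B)
      (f := g) (a := (m:ℝ)/n) (b := t) (fun s _ => hB s)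
    have h3 : |t - m / n| ≤ 1 / n := by
      rw [abs_le]
      constructor
      · have : (m:ℝ)/n ≤ t := by rw [div_le_iff₀ hn0]; linarith
        have : 0 < 1 / (n:ℝ) := by positivity
        linarith
      · rw [sub_le_iff_le_add, ← add_div, le_div_iff₀ hn0]; linarith
    calc _ ≤ B * |t - m/n| := this
      _ ≤ B * (1 / n) := mul_le_mul_of_nonneg_left h3 hB0
      _ ≤ ε / 2 := by rw [mul_one_div]; exact h2.le
  have hsplit := intervalIntegral.integral_add_adjacent_intervals (hii 0 (m/n)) (hii (m/n) t)
  rw [← hsplit, ← sub_sub]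
  refine (abs_sub _ _).trans ?_
  linarith

theorem shift_bound {F : ℕ → ℝ} {B : ℝ} (hB : ∀ k, |F k| ≤ B) (m i : ℕ) :
    |∑ k ∈ Finset.range m, F k - ∑ k ∈ Finset.range m, F (k + i)| ≤ 2 * B * i := by
  induction i with
  | zero => simp
  | succ i ih =>
    have : ∑ k ∈ Finset.range m, F (k + i) - ∑ k ∈ Finset.range m, F (k + (i+1))
        = F i - F (m + i) := by
      rw [← Finset.sum_sub_distrib]
      have := Finset.sum_range_sub' (fun k => F (k + i)) m
      simp only [zero_add] at this
      rw [← this]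
      refine Finset.sum_congr rfl fun k _ => ?_
      congr 2; ring
    have h1 := abs_le.1 ih
    have h2 := abs_le.1 (hB i)
    have h3 := abs_le.1 (hB (m+i))
    push_cast
    rw [abs_le]; constructor <;> nlinarith

theorem avg_bound {F : ℕ → ℝ} {B : ℝ} (hB : ∀ k, |F k| ≤ B) (m N : ℕ) (hN : 1 ≤ N) :
    |∑ k ∈ Finset.range m, F k
      - ∑ k ∈ Finset.range m, (N:ℝ)⁻¹ * ∑ i ∈ Finset.range N, F (k + i)| ≤ 2 * B * N := by
  have hN0 : (0:ℝ) < N := by exact_mod_cast hN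
  have hB0 : 0 ≤ B := (abs_nonneg _).trans (hB 0)
  have : ∑ k ∈ Finset.range m, F k
      - ∑ k ∈ Finset.range m, (N:ℝ)⁻¹ * ∑ i ∈ Finset.range N, F (k + i)
      = (N:ℝ)⁻¹ * ∑ i ∈ Finset.range N,
        (∑ k ∈ Finset.range m, F k - ∑ k ∈ Finset.range m, F (k + i)) := by
    rw [Finset.sum_sub_distrib, Finset.sum_const, Finset.card_range, nsmul_eq_mul, mul_sub,
      ← mul_assoc, inv_mul_cancel₀ hN0.ne', one_mul, ← Finset.mul_sum, Finset.sum_comm]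
  rw [this, abs_mul, abs_of_nonneg (by positivity : (0:ℝ) ≤ (N:ℝ)⁻¹), inv_mul_le_iff₀ hN0]
  refine (Finset.abs_sum_le_sum_abs _ _).trans ?_
  have : ∀ i ∈ Finset.range N,
      |∑ k ∈ Finset.range m, F k - ∑ k ∈ Finset.range m, F (k + i)| ≤ 2 * B * N := by
    intro i hi
    refine (shift_bound hB m i).trans ?_
    have : (i:ℝ) ≤ N := by exact_mod_cast (Finset.mem_range.1 hi).le
    nlinarith
  refine (Finset.sum_le_sum this).trans ?_
  simp

/-- clamped time -/
noncomputable def tau (n k : ℕ) : Icc (0:ℝ) 1 := projIcc 0 1 zero_le_one ((k:ℝ)/n)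

theorem tau_dist (n k i : ℕ) : dist (tau n (k + i)) (tau n k) ≤ (i:ℝ) / n := by
  have := (LipschitzWith.projIcc (zero_le_one (α := ℝ))).dist_le_mul (((k+i:ℕ):ℝ)/n) ((k:ℝ)/n)
  refine this.trans ?_
  rw [Real.dist_eq, NNReal.coe_one, one_mul, ← sub_div]
  push_cast
  rw [add_sub_cancel_left, abs_of_nonneg (by positivity)]

theorem orb_close {X : Type*} [MetricSpace X] [CompactSpace X] {Γ : Icc (0:ℝ) 1 → X → X}
    (hΓ : Continuous (Function.uncurry Γ)) {S orb : ℕ → ℕ → X → X}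
    (hS : ∀ ε > 0, ∀ᶠ n in atTop, ∀ k x, dist (S n k x) (Γ (tau n k) x) < ε)
    (horb : ∀ n k x, orb n (k+1) x = S n (k+1) (orb n k x)) (i : ℕ) :
    ∀ ε > 0, ∀ᶠ n in atTop, ∀ k x,
      dist (orb n (k+i) x) ((Γ (tau n k))^[i] (orb n k x)) < ε := by
  have huc := CompactSpace.uniformContinuous_of_continuous hΓ
  induction i with
  | zero => intro ε hε; exact Eventually.of_forall fun n k x => by simpa using hε
  | succ i ih =>
    intro ε hε
    obtain ⟨δ, hδ, hΓδ⟩ := Metric.uniformContinuous_iff.1 huc (ε/2) (by positivity)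
    have e2 : ∀ᶠ n : ℕ in atTop, ((i+1:ℕ):ℝ) / n < δ :=
      (tendsto_order.1 (tendsto_const_div_atTop_nhds_zero_nat _)).2 _ hδ
    filter_upwards [ih δ hδ, e2, hS (ε/2) (by positivity)] with n h1 h2 h3 k x
    rw [← add_assoc, horb, Function.iterate_succ_apply']
    have a1 := h3 (k+i+1) (orb n (k+i) x)
    have a2 := hΓδ (a := (tau n (k+(i+1)), orb n (k+i) x))
      (b := (tau n k, (Γ (tau n k))^[i] (orb n k x))) (by
        rw [Prod.dist_eq]
        exact max_lt ((tau_dist n k (i+1)).trans_lt h2) (h1 k x))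
    simp only [Function.uncurry] at a2
    calc _ ≤ _ := dist_triangle _ (Γ (tau n (k+i+1)) (orb n (k+i) x)) _
      _ < ε/2 + ε/2 := add_lt_add a1 a2
      _ = ε := by ring

/-- polygonal path of a sequence -/
noncomputable def zpoly (n : ℕ) (F : ℕ → ℝ) (t : ℝ) : ℝ :=
  (n : ℝ)⁻¹ * ((∑ k ∈ Finset.range ⌊(n : ℝ) * t⌋₊, F k) +
    Int.fract ((n : ℝ) * t) * F ⌊(n : ℝ) * t⌋₊)

theorem soft_main {X : Type*} [MetricSpace X] [CompactSpace X] [MeasurableSpace X] [BorelSpace X]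
    {m : Measure X} [IsProbabilityMeasure m] {Γ : Icc (0:ℝ) 1 → X → X}
    (hΓ : Continuous (Function.uncurry Γ)) {S orb : ℕ → ℕ → X → X}
    (hS : ∀ ε > 0, ∀ᶠ n in atTop, ∀ k x, dist (S n k x) (Γ (tau n k) x) < ε)
    (horb : ∀ n k x, orb n (k+1) x = S n (k+1) (orb n k x))
    (horbc : ∀ n k, Continuous (orb n k))
    {C : ℝ} (hC : 0 < C)
    (hpush : ∀ n k (h : X → ℝ), Continuous h → (∀ x, 0 ≤ h x) →
      ∫ x, h (orb n k x) ∂m ≤ C * ∫ x, h x ∂m)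
    {f : X → ℝ} (hf : Continuous f) {B : ℝ} (hB : ∀ x, |f x| ≤ B) {c : Icc (0:ℝ) 1 → ℝ}
    (hc : ∀ t, Tendsto (fun N : ℕ => ∫ x, |(N:ℝ)⁻¹ * ∑ i ∈ Finset.range N, f ((Γ t)^[i] x)
      - c t| ∂m) atTop (𝓝 0)) {ε : ℝ} (hε : 0 < ε) :
    ∀ᶠ n : ℕ in atTop, ∃ R : X → ℝ, Continuous R ∧ (∀ x, 0 ≤ R x) ∧ ∫ x, R x ∂m ≤ ε ∧
      ∀ x, ∀ t ∈ Icc (0:ℝ) 1, |zpoly n (fun k => f (orb n k x)) t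
        - ∫ s in (0:ℝ)..t, c (projIcc 0 1 zero_le_one s)| ≤ R x := by
  obtain ⟨x0⟩ : Nonempty X := nonempty_of_isProbabilityMeasure m
  have hB0 : 0 ≤ B := (abs_nonneg _).trans (hB x0)
  set a : ℕ → Icc (0:ℝ) 1 → X → ℝ := fun N t x =>
    (N:ℝ)⁻¹ * ∑ i ∈ Finset.range N, f ((Γ t)^[i] x) with ha
  have hac : ∀ N, Continuous (Function.uncurry (a N)) := by
    intro N
    have : ∀ i : ℕ, Continuous (fun p : Icc (0:ℝ) 1 × X => (Γ p.1)^[i] p.2) := by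
      intro i
      induction i with
      | zero => exact continuous_snd
      | succ i ih =>
        simp only [Function.iterate_succ_apply']
        exact hΓ.comp (continuous_fst.prodMk ih)
    exact continuous_const.mul (continuous_finsetSum _ fun i _ => hf.comp (this i))
  have hab : ∀ N t x, |a N t x| ≤ B := by
    intro N t x
    rcases Nat.eq_zero_or_pos N with rfl | hN
    · simpa [ha] using hB0
    rw [ha]
    simp only
    rw [abs_mul, abs_of_nonneg (by positivity : (0:ℝ) ≤ (N:ℝ)⁻¹), inv_mul_le_iff₀ (by positivity)]
    refine (Finset.abs_sum_le_sum_abs _ _).trans ?_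
    refine (Finset.sum_le_sum fun i _ => hB _).trans (by simp)
  have hacx : ∀ N t, Continuous (a N t) := fun N t => (hac N).comp (Continuous.prodMk_right t)
  have hact : ∀ N x, Continuous (fun t => a N t x) := fun N x =>
    (hac N).comp (Continuous.prodMk_left x)
  have hint : ∀ h : X → ℝ, Continuous h → Integrable h m := fun h hh =>
    hh.integrable_of_hasCompactSupport (HasCompactSupport.of_compactSpace h)
  set b : ℕ → Icc (0:ℝ) 1 → ℝ := fun N t => ∫ x, a N t x ∂m with hb
  have hbc : ∀ N, Continuous (b N) := fun N =>
    continuous_of_dominated (bound := fun _ => B) (fun t => (hacx N t).aestronglyMeasurable)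
      (fun t => Eventually.of_forall fun x => hab N t x) (integrable_const _)
      (Eventually.of_forall fun x => hact N x)
  have hbb : ∀ N t, |b N t| ≤ B := by
    intro N t
    have := norm_integral_le_of_norm_le_const (μ := m) (f := a N t) (C := B)
      (Eventually.of_forall fun x => hab N t x)
    simpa using this
  set g : ℕ → Icc (0:ℝ) 1 → ℝ := fun N t => ∫ x, |a N t x - b N t| ∂m with hg
  have habb : ∀ N t x, |a N t x - b N t| ≤ 2 * B := fun N t x =>
    (abs_sub _ _).trans (by linarith [hab N t x, hbb N t])
  have hgc : ∀ N, Continuous (g N) := fun N =>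
    continuous_of_dominated (bound := fun _ => 2 * B)
      (fun t => ((hacx N t).sub continuous_const).abs.aestronglyMeasurable)
      (fun t => Eventually.of_forall fun x => by simpa using habb N t x) (integrable_const _)
      (Eventually.of_forall fun x => ((hact N x).sub (hbc N)).abs)
  have hg0 : ∀ N t, 0 ≤ g N t := fun N t => integral_nonneg fun x => abs_nonneg _
  have hgb : ∀ N t, |g N t| ≤ 2 * B := by
    intro N t
    have := norm_integral_le_of_norm_le_const (μ := m) (f := fun x => |a N t x - b N t|) (C := 2 * B)
      (Eventually.of_forall fun x => by simpa using habb N t x)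
    simpa using this
  have hbcl : ∀ N t, |b N t - c t| ≤ ∫ x, |a N t x - c t| ∂m := by
    intro N t
    have : b N t - c t = ∫ x, (a N t x - c t) ∂m := by
      rw [integral_sub (hint _ (hacx N t)) (integrable_const _)]; simp [hb]
    rw [this]
    exact abs_integral_le_integral_abs
  have hblim : ∀ t, Tendsto (fun N => |b N t - c t|) atTop (𝓝 0) := fun t =>
    squeeze_zero (fun N => abs_nonneg _) (fun N => hbcl N t) (hc t)
  have hblim' : ∀ t, Tendsto (fun N => b N t) atTop (𝓝 (c t)) := fun t =>
    tendsto_iff_norm_sub_tendsto_zero.2 (hblim t)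
  have hcb : ∀ t, |c t| ≤ B := fun t => le_of_tendsto' (hblim' t).abs fun N => hbb N t
  have hglim : ∀ t, Tendsto (fun N => g N t) atTop (𝓝 0) := by
    intro t
    have h2 := (hc t).const_mul 2
    rw [mul_zero] at h2
    refine squeeze_zero (fun N => hg0 N t) (fun N => ?_) h2
    have : g N t ≤ ∫ x, (|a N t x - c t| + |b N t - c t|) ∂m := by
      refine integral_mono (hint _ ((hacx N t).sub continuous_const).abs)
        (hint _ (((hacx N t).sub continuous_const).abs.add continuous_const)) fun x => ?_
      rw [abs_sub_comm (b N t)]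
      exact abs_sub_le _ _ _
    have hi : Integrable (fun x => |a N t x - c t|) m :=
      hint _ ((hacx N t).sub continuous_const).abs
    rw [integral_add hi (integrable_const _)] at this
    have h3 := hbcl N t
    simp at this
    linarith
  set P : ℝ → Icc (0:ℝ) 1 := projIcc 0 1 zero_le_one with hP
  have hPc : Continuous P := continuous_projIcc
  have hPu : UniformContinuous P := (LipschitzWith.projIcc (zero_le_one (α := ℝ))).uniformContinuous
  have hcm : Measurable (fun s => c (P s)) :=
    measurable_of_tendsto_metrizable (fun N => ((hbc N).comp hPc).measurable)
      (tendsto_pi_nhds.2 fun s => hblim' (P s))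
  have hcii : ∀ u v, IntervalIntegrable (fun s => c (P s)) volume u v := by
    intro u v
    refine (intervalIntegrable_const (c := B)).mono_fun hcm.aestronglyMeasurable
      (Eventually.of_forall fun s => ?_)
    simp only [Real.norm_eq_abs]
    rw [abs_of_nonneg hB0]; exact hcb _
  have hbii : ∀ N u v, IntervalIntegrable (fun s => b N (P s)) volume u v := fun N u v =>
    ((hbc N).comp hPc).intervalIntegrable u v
  have hI1 : Tendsto (fun N => ∫ s in (0:ℝ)..1, g N (P s)) atTop (𝓝 0) := by
    have := intervalIntegral.tendsto_integral_filter_of_dominated_convergence (μ := volume)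
      (a := 0) (b := 1) (l := atTop) (F := fun N s => g N (P s)) (f := fun _ => 0) (fun _ => 2 * B)
      (Eventually.of_forall fun N => ((hgc N).comp hPc).aestronglyMeasurable)
      (Eventually.of_forall fun N => Eventually.of_forall fun s _ => hgb N _)
      intervalIntegrable_const (Eventually.of_forall fun s _ => hglim _)
    simpa using this
  have hI2 : Tendsto (fun N => ∫ s in (0:ℝ)..1, |b N (P s) - c (P s)|) atTop (𝓝 0) := by
    have := intervalIntegral.tendsto_integral_filter_of_dominated_convergence (μ := volume)
      (a := 0) (b := 1) (l := atTop) (F := fun N s => |b N (P s) - c (P s)|) (f := fun _ => 0)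
      (fun _ => 2 * B)
      (Eventually.of_forall fun N =>
        (((hbc N).comp hPc).measurable.sub hcm).abs.aestronglyMeasurable)
      (Eventually.of_forall fun N => Eventually.of_forall fun s _ => by
        rw [Real.norm_eq_abs, abs_abs]
        exact (abs_sub _ _).trans (by linarith [hbb N (P s), hcb (P s)]))
      intervalIntegrable_const (Eventually.of_forall fun s _ => hblim _)
    simpa using this
  obtain ⟨N, hN1, hN2, hN⟩ := (((tendsto_order.1 hI1).2 (ε/(8*C)) (by positivity)).and
    (((tendsto_order.1 hI2).2 (ε/8) (by positivity)).and (eventually_ge_atTop 1))).exists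
  have hN0 : (0:ℝ) < N := by exact_mod_cast hN
  have hRb := riemann_unif
    ((CompactSpace.uniformContinuous_of_continuous (hbc N)).comp hPu) (fun s => hbb N (P s))
    (ε := ε/8) (by positivity)
  have hRg := riemann_unif
    ((CompactSpace.uniformContinuous_of_continuous (hgc N)).comp hPu) (fun s => hgb N (P s))
    (ε := ε/(8*C)) (by positivity)
  have hfu := CompactSpace.uniformContinuous_of_continuous hf
  obtain ⟨δ, hδ, hfδ⟩ := Metric.uniformContinuous_iff.1 hfu (ε/8) (by positivity)
  have hcl : ∀ᶠ n in atTop, ∀ i ∈ Finset.range N, ∀ k x,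
      dist (orb n (k+i) x) ((Γ (tau n k))^[i] (orb n k x)) < δ := by
    rw [Filter.eventually_all_finset]
    exact fun i _ => orb_close hΓ hS horb i δ hδ
  have e1 : ∀ᶠ n : ℕ in atTop, B / n < ε / 8 :=
    (tendsto_order.1 (tendsto_const_div_atTop_nhds_zero_nat _)).2 _ (by positivity)
  have e2 : ∀ᶠ n : ℕ in atTop, (2 * B * N) / n < ε / 8 :=
    (tendsto_order.1 (tendsto_const_div_atTop_nhds_zero_nat _)).2 _ (by positivity)
  filter_upwards [hRb, hRg, hcl, e1, e2, eventually_ge_atTop 1] with n hRb hRg hcl e1 e2 hn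
  have hn0 : (0:ℝ) < n := by exact_mod_cast hn
  have hninv : (0:ℝ) ≤ (n:ℝ)⁻¹ := by positivity
  set V : X → ℝ := fun x => (n:ℝ)⁻¹ * ∑ k ∈ Finset.range n,
    |a N (tau n k) (orb n k x) - b N (tau n k)| with hV
  have hVk : ∀ k, Continuous (fun x => |a N (tau n k) (orb n k x) - b N (tau n k)|) := fun k =>
    (((hacx N _).comp (horbc n k)).sub continuous_const).abs
  have hVc : Continuous V := continuous_const.mul (continuous_finsetSum _ fun k _ => hVk k)
  have hV0 : ∀ x, 0 ≤ V x := fun x => mul_nonneg hninv (Finset.sum_nonneg fun k _ => abs_nonneg _)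
  refine ⟨fun x => V x + 5 * (ε/8), hVc.add continuous_const, fun x => ?_, ?_, ?_⟩
  · have := hV0 x
    positivity
  · rw [integral_add (hint _ hVc) (integrable_const _)]
    have h1 : ∫ x, V x ∂m ≤ 2 * (ε/8) := by
      rw [hV, integral_const_mul, integral_finsetSum _ (fun k _ => hint _ (hVk k))]
      have h2 : ∀ k ∈ Finset.range n,
          ∫ x, |a N (tau n k) (orb n k x) - b N (tau n k)| ∂m ≤ C * g N (P (k/n)) := by
        intro k _
        exact hpush n k (fun y => |a N (tau n k) y - b N (tau n k)|)
          ((hacx N _).sub continuous_const).abs (fun y => abs_nonneg _)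
      have h3 := hRg 1 ⟨zero_le_one, le_rfl⟩
      rw [mul_one, Nat.floor_natCast] at h3
      have h4 := (abs_le.1 h3).2
      have h5 := mul_le_mul_of_nonneg_left (Finset.sum_le_sum h2) hninv
      refine h5.trans ?_
      rw [← Finset.mul_sum, mul_left_comm]
      have h6 : (n:ℝ)⁻¹ * ∑ k ∈ Finset.range n, g N (P (k/n)) ≤ 2 * (ε/(8*C)) := by
        simp only [Function.comp] at h4
        linarith
      refine (mul_le_mul_of_nonneg_left h6 hC.le).trans (le_of_eq ?_)
      field_simp
    simp
    linarith
  · intro x t ht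
    set q := ⌊(n:ℝ) * t⌋₊ with hq
    have hnt : 0 ≤ (n:ℝ) * t := mul_nonneg hn0.le ht.1
    have hqn : q ≤ n := by
      have : (q:ℝ) ≤ n := (Nat.floor_le hnt).trans (by nlinarith [ht.2])
      exact_mod_cast this
    set F : ℕ → ℝ := fun k => f (orb n k x) with hF
    have hFB : ∀ k, |F k| ≤ B := fun k => hB _
    set s1 := ∑ k ∈ Finset.range q, F k with hs1
    set s2 := ∑ k ∈ Finset.range q, (N:ℝ)⁻¹ * ∑ i ∈ Finset.range N, F (k + i) with hs2
    set s3 := ∑ k ∈ Finset.range q, a N (tau n k) (orb n k x) with hs3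
    set s4 := ∑ k ∈ Finset.range q, b N (tau n k) with hs4
    have d1 : |zpoly n F t - (n:ℝ)⁻¹ * s1| ≤ ε/8 := by
      rw [zpoly, ← hq, ← hs1, mul_add, add_sub_cancel_left, abs_mul, abs_of_nonneg hninv, abs_mul,
        abs_of_nonneg (Int.fract_nonneg _)]
      refine le_trans ?_ e1.le
      rw [inv_mul_le_iff₀ hn0, mul_div_cancel₀ _ hn0.ne']
      calc _ ≤ 1 * B := mul_le_mul (Int.fract_lt_one _).le (hFB _) (abs_nonneg _) zero_le_one
        _ = B := one_mul _
    have d2 : |(n:ℝ)⁻¹ * s1 - (n:ℝ)⁻¹ * s2| ≤ ε/8 := by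
      rw [← mul_sub, abs_mul, abs_of_nonneg hninv]
      refine le_trans ?_ e2.le
      rw [inv_mul_le_iff₀ hn0, mul_div_cancel₀ _ hn0.ne']
      exact avg_bound hFB q N hN
    have d3 : |(n:ℝ)⁻¹ * s2 - (n:ℝ)⁻¹ * s3| ≤ ε/8 := by
      rw [← mul_sub, abs_mul, abs_of_nonneg hninv, inv_mul_le_iff₀ hn0, hs2, hs3,
        ← Finset.sum_sub_distrib]
      refine (Finset.abs_sum_le_sum_abs _ _).trans ?_
      have : ∀ k ∈ Finset.range q, |(N:ℝ)⁻¹ * ∑ i ∈ Finset.range N, F (k + i)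
          - a N (tau n k) (orb n k x)| ≤ ε/8 := by
        intro k _
        rw [ha]
        simp only
        rw [← mul_sub, abs_mul, abs_of_nonneg (by positivity : (0:ℝ) ≤ (N:ℝ)⁻¹),
          inv_mul_le_iff₀ hN0, ← Finset.sum_sub_distrib]
        refine (Finset.abs_sum_le_sum_abs _ _).trans ?_
        refine (Finset.sum_le_sum fun i hi => (hfδ (hcl i hi k x)).le).trans ?_
        simp
      refine (Finset.sum_le_sum this).trans ?_
      rw [Finset.sum_const, Finset.card_range, nsmul_eq_mul]
      have : (q:ℝ) ≤ n := by exact_mod_cast hqn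
      exact mul_le_mul_of_nonneg_right this (by positivity)
    have d4 : |(n:ℝ)⁻¹ * s3 - (n:ℝ)⁻¹ * s4| ≤ V x := by
      rw [← mul_sub, abs_mul, abs_of_nonneg hninv, hV]
      refine mul_le_mul_of_nonneg_left ?_ hninv
      rw [hs3, hs4, ← Finset.sum_sub_distrib]
      refine (Finset.abs_sum_le_sum_abs _ _).trans ?_
      exact Finset.sum_le_sum_of_subset_of_nonneg (Finset.range_mono hqn)
        fun _ _ _ => abs_nonneg _
    have d5 : |(n:ℝ)⁻¹ * s4 - ∫ s in (0:ℝ)..t, b N (P s)| ≤ ε/8 := hRb t ht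
    have d6 : |(∫ s in (0:ℝ)..t, b N (P s)) - ∫ s in (0:ℝ)..t, c (P s)| ≤ ε/8 := by
      rw [← intervalIntegral.integral_sub (hbii N 0 t) (hcii 0 t)]
      refine (intervalIntegral.abs_integral_le_integral_abs ht.1).trans ?_
      refine le_trans ?_ hN2.le
      refine intervalIntegral.integral_mono_interval le_rfl ht.1 ht.2
        (Eventually.of_forall fun s => abs_nonneg _) ?_
      exact ((hbii N 0 1).sub (hcii 0 1)).abs
    have t1 := abs_le.1 d1
    have t2 := abs_le.1 d2
    have t3 := abs_le.1 d3
    have t4 := abs_le.1 d4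
    have t5 := abs_le.1 d5
    have t6 := abs_le.1 d6
    rw [abs_le]; constructor <;> linarith
theorem dist_le_dC1 {lam Astar : ℝ} (T₁ T₂ : CM lam Astar) (x : Circle1) :
    dist (T₁.toMap x) (T₂.toMap x) ≤ dC1 T₁ T₂ := by
  have h1 : BddAbove (range fun x : Circle1 => dist (T₁.toMap x) (T₂.toMap x)) := by
    obtain ⟨K, hK⟩ := Metric.isBounded_iff.1 (isCompact_univ (X := Circle1)).isBounded
    exact ⟨K, by rintro _ ⟨y, rfl⟩; exact hK trivial trivial⟩
  have h2 : 0 ≤ ⨆ x : Circle1, |T₁.dmap x - T₂.dmap x| := Real.iSup_nonneg fun _ => abs_nonneg _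
  have h3 := le_ciSup h1 x
  unfold dC1
  linarith

theorem gamma_cont {lam Astar η : ℝ} (hη : 0 < η) {γ : ℝ → CM lam Astar} (hγ : HolderCurve η γ) :
    Continuous (Function.uncurry (fun (t : Icc (0:ℝ) 1) => (γ t).toMap)) := by
  obtain ⟨H, hH⟩ := hγ
  rw [continuous_iff_continuousAt]
  rintro ⟨t, x⟩
  rw [ContinuousAt, tendsto_iff_dist_tendsto_zero]
  have hlim : Tendsto (fun p : Icc (0:ℝ) 1 × Circle1 => H * |(p.1:ℝ) - t| ^ η
      + dist ((γ t).toMap p.2) ((γ t).toMap x)) (𝓝 (t, x)) (𝓝 0) := by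
    have hc : Continuous (fun p : Icc (0:ℝ) 1 × Circle1 => H * |(p.1:ℝ) - t| ^ η
      + dist ((γ t).toMap p.2) ((γ t).toMap x)) := by
      refine Continuous.add (continuous_const.mul ?_)
        (((γ t).cont.comp continuous_snd).dist continuous_const)
      refine Continuous.rpow_const ?_ (fun _ => Or.inr hη.le)
      exact ((continuous_subtype_val.comp continuous_fst).sub continuous_const).abs
    have := hc.tendsto (t, x)
    simpa [Real.zero_rpow hη.ne'] using this
  refine squeeze_zero (fun _ => dist_nonneg) (fun p => ?_) hlim
  refine (dist_triangle _ ((γ t).toMap p.2) _).trans ?_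
  refine add_le_add_left ?_ _
  exact (dist_le_dC1 _ _ _).trans (hH _ p.1.2 _ t.2)

theorem arrIter_clamp {lam Astar : ℝ} (Tarr : ℕ → ℕ → CM lam Astar) (n k : ℕ) (hk : k ≤ n) :
    arrIter (fun n k => Tarr n (min k n)) n k = arrIter Tarr n k := by
  induction k with
  | zero => rfl
  | succ k ih => rw [arrIter, arrIter, ih (by omega), min_eq_left hk]

theorem arrIter_cont {lam Astar : ℝ} (Tarr : ℕ → ℕ → CM lam Astar) (n k : ℕ) :
    Continuous (arrIter Tarr n k) := by
  induction k with
  | zero => exact continuous_id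
  | succ k ih => exact (Tarr n (k+1)).cont.comp ih

theorem arr_close {lam Astar η : ℝ} (hη : 0 < η) {γ : ℝ → CM lam Astar}
    {Tarr : ℕ → ℕ → CM lam Astar} (hT : ArrayApprox η γ Tarr) :
    ∀ ε > 0, ∀ᶠ n in atTop, ∀ k x,
      dist ((Tarr n (min k n)).toMap x) ((γ (tau n k)).toMap x) < ε := by
  obtain ⟨M, hM⟩ := hT
  intro ε hε
  have hlim : Tendsto (fun n : ℕ => M / (n:ℝ) ^ η) atTop (𝓝 0) :=
    ((tendsto_rpow_atTop hη).comp tendsto_natCast_atTop_atTop).const_div_atTop M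
  filter_upwards [(tendsto_order.1 hlim).2 ε hε, eventually_ge_atTop 1] with n h1 hn k x
  have hn0 : (0:ℝ) < n := by exact_mod_cast hn
  have htau : ((tau n k : Icc (0:ℝ) 1) : ℝ) = (min k n : ℕ) / (n:ℝ) := by
    unfold tau
    rcases le_total k n with h | h
    · have hk : (k:ℝ) ≤ n := by exact_mod_cast h
      rw [projIcc_of_mem _ ⟨by positivity, by rw [div_le_one hn0]; exact hk⟩, min_eq_left h]
    · have hk : (n:ℝ) ≤ k := by exact_mod_cast h
      rw [projIcc_of_right_le _ (by rw [le_div_iff₀ hn0]; linarith), min_eq_right h,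
        div_self hn0.ne']
  have h2 := hM n hn (tau n k) (tau n k).2
  have h3 : ⌊(n:ℝ) * (tau n k : Icc (0:ℝ) 1)⌋₊ = min k n := by
    rw [htau, mul_div_cancel₀ _ hn0.ne', Nat.floor_natCast]
  rw [h3] at h2
  refine (dist_le_dC1 _ _ _).trans_lt (lt_of_le_of_lt ?_ h1)
  rw [le_div_iff₀ (by positivity), mul_comm]
  exact h2

theorem zetaP_eq {lam Astar : ℝ} (Tarr : ℕ → ℕ → CM lam Astar) (f : Circle1 → ℝ) (n : ℕ)
    (x : Circle1) {t : ℝ} (ht : t ∈ Icc (0:ℝ) 1) :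
    zetaP Tarr f n x t
      = zpoly n (fun k => f (arrIter (fun n k => Tarr n (min k n)) n k x)) t := by
  have hnt : 0 ≤ (n:ℝ) * t := mul_nonneg (Nat.cast_nonneg n) ht.1
  have hqn : ⌊(n:ℝ) * t⌋₊ ≤ n := by
    have : ((⌊(n:ℝ) * t⌋₊ : ℕ):ℝ) ≤ n :=
      (Nat.floor_le hnt).trans (mul_le_of_le_one_right (Nat.cast_nonneg n) ht.2)
    exact_mod_cast this
  unfold zetaP zpoly fnk
  simp only
  rw [arrIter_clamp Tarr n _ hqn]
  congr 2
  refine Finset.sum_congr rfl fun k hk => ?_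
  rw [arrIter_clamp Tarr n k (by have := Finset.mem_range.1 hk; omega)]

theorem zetaP_path_cont {lam Astar : ℝ} (Tarr : ℕ → ℕ → CM lam Astar) {f : Circle1 → ℝ}
    (hf : Continuous f) (n : ℕ) : Continuous (fun x => pathOf (zetaP Tarr f n x)) := by
  rw [continuous_iff_continuousAt]
  intro y
  rw [ContinuousAt, UniformFun.tendsto_iff_tendstoUniformly, Metric.tendstoUniformly_iff]
  intro ε hε
  have hc : Continuous (fun x => (n:ℝ)⁻¹ * (2 * ∑ k ∈ Finset.range (n+1),
      |fnk Tarr f n k y - fnk Tarr f n k x|)) := by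
    refine continuous_const.mul (continuous_const.mul (continuous_finsetSum _ fun k _ => ?_))
    exact (continuous_const.sub (hf.comp (arrIter_cont Tarr n k))).abs
  have h0 := hc.tendsto y
  simp only [sub_self, abs_zero, Finset.sum_const_zero, mul_zero] at h0
  filter_upwards [(tendsto_order.1 h0).2 ε hε] with x hx t
  refine lt_of_le_of_lt ?_ hx
  change |zetaP Tarr f n y t - zetaP Tarr f n x t| ≤ _
  have ht := t.2
  have hnt : 0 ≤ (n:ℝ) * t := mul_nonneg (Nat.cast_nonneg n) ht.1
  have hqn : ⌊(n:ℝ) * t⌋₊ ≤ n := by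
    have : ((⌊(n:ℝ) * t⌋₊ : ℕ):ℝ) ≤ n :=
      (Nat.floor_le hnt).trans (mul_le_of_le_one_right (Nat.cast_nonneg n) ht.2)
    exact_mod_cast this
  unfold zetaP
  rw [← mul_sub, abs_mul, abs_of_nonneg (by positivity : (0:ℝ) ≤ (n:ℝ)⁻¹)]
  refine mul_le_mul_of_nonneg_left ?_ (by positivity)
  rw [add_sub_add_comm, ← mul_sub, ← Finset.sum_sub_distrib, two_mul]
  refine (abs_add_le _ _).trans (add_le_add ?_ ?_)
  · refine (Finset.abs_sum_le_sum_abs _ _).trans ?_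
    exact Finset.sum_le_sum_of_subset_of_nonneg (Finset.range_mono (by omega))
        fun _ _ _ => abs_nonneg _
  · rw [abs_mul, abs_of_nonneg (Int.fract_nonneg _)]
    refine (mul_le_of_le_one_left (abs_nonneg _) (Int.fract_lt_one _).le).trans ?_
    exact Finset.single_le_sum (f := fun k => |fnk Tarr f n k y - fnk Tarr f n k x|)
      (fun _ _ => abs_nonneg _) (Finset.mem_range.2 (by omega))

theorem path_nhds (F : BoundedContinuousFunction PathSpace ℝ) (ω₀ : PathSpace) {ε : ℝ}
    (hε : 0 < ε) : ∃ δ > 0, ∀ ω : PathSpace,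
      (∀ t : Icc (0:ℝ) 1, |UniformFun.toFun ω t - UniformFun.toFun ω₀ t| < δ) →
        |F ω - F ω₀| < ε := by
  have h := F.continuous.continuousAt (x := ω₀)
  have hb := (UniformFun.hasBasis_nhds_of_basis (Icc (0:ℝ) 1) ℝ ω₀ Metric.uniformity_basis_dist)
  obtain ⟨δ, hδ, hsub⟩ := hb.mem_iff.1 (h (Metric.ball_mem_nhds _ hε))
  refine ⟨δ, hδ, fun ω hω => ?_⟩
  have : ω ∈ F ⁻¹' Metric.ball (F ω₀) ε := hsub (fun t => by
    have := hω t
    rw [abs_sub_comm] at this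
    exact this)
  exact this

/-- Proposition `prop:meanLip`.  If `f` is Lipschitz and `μ` has a strictly
positive Lipschitz density, then the laws of the paths `t ↦ ζₙ(x,t)` converge weakly on
`C⁰([0,1],ℝ)` to the point mass at `ζ(t) = ∫₀ᵗ μ̂ₛ(f) ds`.  (Weak convergence is expressed by
testing against all bounded continuous functions on the path space.) -/
theorem statement15 {lam Astar : ℝ} (hlam : 1 < lam) (hA : 0 < Astar)
    {η : ℝ} (hη : η ∈ Set.Ioo (0 : ℝ) 1)
    (γ : ℝ → CM lam Astar) (hγ : HolderCurve η γ)
    (Tarr : ℕ → ℕ → CM lam Astar) (hT : ArrayApprox η γ Tarr)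
    (f : Circle1 → ℝ) (hf : ∃ K : NNReal, LipschitzWith K f)
    (ρhat : ℝ → Circle1 → ℝ) (hρhat : ∀ t ∈ Set.Icc (0 : ℝ) 1, IsSRBDensity (γ t) (ρhat t))
    (ρ : Circle1 → ℝ) (hρ : IsProbDensity ρ) (hρpos : ∀ x, 0 < ρ x)
    (hρlip : ∃ K : NNReal, LipschitzWith K ρ) :
    ∀ F : BoundedContinuousFunction PathSpace ℝ,
      Tendsto (fun n : ℕ => ∫ x : Circle1, F (pathOf (zetaP Tarr f n x)) * ρ x)
        atTop
        (𝓝 (F (pathOf (fun t => ∫ s in (0:ℝ)..t, ∫ y : Circle1, f y * ρhat s y)))) := by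
  intro F
  obtain ⟨Kf, hKf⟩ := hf
  have hfc := hKf.continuous
  obtain ⟨Kρ, hKρ⟩ := hρlip
  have hρc := hKρ.continuous
  obtain ⟨B, hB⟩ : ∃ B, ∀ x, |f x| ≤ B := by
    obtain ⟨B, hB⟩ := isCompact_univ.exists_bound_of_continuousOn hfc.continuousOn
    exact ⟨B, fun x => hB x trivial⟩
  obtain ⟨L, hL⟩ : ∃ L, ∀ x, |ρ x| ≤ L := by
    obtain ⟨B, hB⟩ := isCompact_univ.exists_bound_of_continuousOn hρc.continuousOn
    exact ⟨B, fun x => hB x trivial⟩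
  have hL0 : 0 ≤ L := (abs_nonneg _).trans (hL 0)
  have hpv : IsProbabilityMeasure (volume : Measure Circle1) := by
    constructor; simp
  have hint : ∀ h : Circle1 → ℝ, Continuous h → Integrable h volume := fun h hh =>
    hh.integrable_of_hasCompactSupport (HasCompactSupport.of_compactSpace h)
  obtain ⟨κ, hκ⟩ : ∃ κ, κ = Astar / (lam * (lam - 1)) := ⟨_, rfl⟩
  have hk : 0 ≤ κ := by
    rw [hκ]; have : 0 < lam - 1 := by linarith
    positivity
  set T' : ℕ → ℕ → CM lam Astar := fun n k => Tarr n (min k n) with hT'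
  have hpush : ∀ n k (h : Circle1 → ℝ), Continuous h → (∀ x, 0 ≤ h x) →
      ∫ x, h (arrIter T' n k x) ≤ Real.exp κ * ∫ x, h x := by
    intro n k h hh h0
    obtain ⟨G, G', hG, hGx⟩ := arr_good hlam hA hκ T' n k
    have hi : Integrable (fun x => h (arrIter T' n k x)) volume :=
      hint _ (hh.comp (arrIter_cont T' n k))
    have := hG.push hk hGx (fun y => ENNReal.ofReal (h y))
    rw [← ofReal_integral_eq_lintegral_ofReal (hint _ hh) (Eventually.of_forall h0),
      ← ofReal_integral_eq_lintegral_ofReal hi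
        (Eventually.of_forall fun x => h0 _), ← ENNReal.ofReal_mul (Real.exp_pos _).le] at this
    exact (ENNReal.ofReal_le_ofReal_iff
      (mul_nonneg (Real.exp_pos _).le (integral_nonneg h0))).1 this
  have hmain := fun {ε : ℝ} (hε : 0 < ε) => soft_main (m := (volume : Measure Circle1))
    (Γ := fun t : Icc (0:ℝ) 1 => (γ t).toMap) (gamma_cont hη.1 hγ)
    (S := fun n k => (T' n k).toMap) (orb := arrIter T') (arr_close hη.1 hT)
    (fun n k x => rfl) (arrIter_cont T') (Real.exp_pos κ) hpush hfc hB
    (c := fun t => ∫ y, f y * ρhat t y)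
    (fun t => srb_L1 hlam hA (γ t) (hρhat t t.2) hfc hB) hε
  set ω₀ : PathSpace := pathOf (fun t => ∫ s in (0:ℝ)..t, ∫ y : Circle1, f y * ρhat s y) with hω₀
  have hω₀t : ∀ t : Icc (0:ℝ) 1, UniformFun.toFun ω₀ t = ∫ s in (0:ℝ)..t,
      ∫ y, f y * ρhat (projIcc 0 1 zero_le_one s : Icc (0:ℝ) 1) y := by
    intro t
    change (∫ s in (0:ℝ)..t, ∫ y : Circle1, f y * ρhat s y) = _
    refine intervalIntegral.integral_congr fun s hs => ?_
    rw [uIcc_of_le t.2.1] at hs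
    beta_reduce
    rw [projIcc_of_mem _ (show s ∈ Icc (0:ℝ) 1 from ⟨hs.1, hs.2.trans t.2.2⟩)]
  rw [Metric.tendsto_atTop']
  intro ε hε
  obtain ⟨δ, hδ, hFδ⟩ := path_nhds F ω₀ (ε := ε/2) (by positivity)
  set Q : ℝ := 2 * ‖F‖ / δ * L with hQ
  have hQ0 : 0 ≤ Q := by positivity
  have hev := hmain (ε := ε / (4 * (Q + 1))) (by positivity)
  rw [eventually_atTop] at hev
  obtain ⟨n0, hn0⟩ := hev
  refine ⟨n0, fun n hn => ?_⟩
  obtain ⟨R, hRc, hR0, hRi, hRb⟩ := hn0 n hn.le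
  have hFc : Continuous (fun x => F (pathOf (zetaP Tarr f n x))) :=
    F.continuous.comp (zetaP_path_cont Tarr hfc n)
  have hpt : ∀ x, |F (pathOf (zetaP Tarr f n x)) - F ω₀| ≤ ε/2 + 2 * ‖F‖ / δ * R x := by
    intro x
    by_cases hx : R x < δ
    · have := hFδ (pathOf (zetaP Tarr f n x)) (fun t => by
        rw [hω₀t t]
        change |zetaP Tarr f n x t - _| < δ
        rw [zetaP_eq Tarr f n x t.2]
        exact (hRb x t t.2).trans_lt hx)
      have h2 : 0 ≤ 2 * ‖F‖ / δ * R x := mul_nonneg (by positivity) (hR0 x)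
      linarith
    · push Not at hx
      have h1 : |F (pathOf (zetaP Tarr f n x)) - F ω₀| ≤ 2 * ‖F‖ := by
        refine (abs_sub _ _).trans ?_
        have a1 := F.norm_coe_le_norm (pathOf (zetaP Tarr f n x))
        have a2 := F.norm_coe_le_norm ω₀
        rw [Real.norm_eq_abs] at a1 a2
        linarith
      have h2 : 2 * ‖F‖ ≤ 2 * ‖F‖ / δ * R x := by
        rw [div_mul_eq_mul_div, le_div_iff₀ hδ]
        exact mul_le_mul_of_nonneg_left hx (by positivity)
      linarith
  have heq : (∫ x : Circle1, F (pathOf (zetaP Tarr f n x)) * ρ x) - F ω₀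
      = ∫ x : Circle1, (F (pathOf (zetaP Tarr f n x)) - F ω₀) * ρ x := by
    have e : F ω₀ = ∫ x : Circle1, F ω₀ * ρ x := by
      rw [integral_const_mul, hρ.2.1, mul_one]
    conv_lhs => rw [e]
    have j1 : Integrable (fun x => F (pathOf (zetaP Tarr f n x)) * ρ x) volume :=
      hint _ (hFc.mul hρc)
    have j2 : Integrable (fun x => F ω₀ * ρ x) volume := hint _ (continuous_const.mul hρc)
    rw [← integral_sub j1 j2]
    refine integral_congr_ae (Eventually.of_forall fun x => ?_)
    ring
  rw [Real.dist_eq, heq]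
  have hb1 : |∫ x : Circle1, (F (pathOf (zetaP Tarr f n x)) - F ω₀) * ρ x|
      ≤ ∫ x : Circle1, (ε/2 * ρ x + Q * R x) := by
    refine abs_integral_le_integral_abs.trans ?_
    refine integral_mono (hint _ ((hFc.sub continuous_const).mul hρc).abs)
      (hint _ ((continuous_const.mul hρc).add (continuous_const.mul hRc))) fun x => ?_
    simp only [abs_mul]
    rw [abs_of_pos (hρpos x)]
    have a1 := mul_le_mul_of_nonneg_right (hpt x) (hρpos x).le
    have a2 : ρ x ≤ L := (le_abs_self _).trans (hL x)
    have a3 : 0 ≤ 2 * ‖F‖ / δ * R x := mul_nonneg (by positivity) (hR0 x)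
    have a4 := mul_le_mul_of_nonneg_left a2 a3
    have a5 : Q * R x = 2 * ‖F‖ / δ * R x * L := by rw [hQ]; ring
    rw [a5]
    linarith
  refine hb1.trans_lt ?_
  have i1 : Integrable (fun x => ε/2 * ρ x) (volume : Measure Circle1) :=
    hint _ (continuous_const.mul hρc)
  have i2 : Integrable (fun x => Q * R x) (volume : Measure Circle1) :=
    hint _ (continuous_const.mul hRc)
  rw [integral_add i1 i2, integral_const_mul, integral_const_mul, hρ.2.1]
  have h6 : Q * ∫ x, R x ≤ ε / 4 := by
    calc Q * ∫ x, R x ≤ (Q + 1) * (ε / (4 * (Q + 1))) :=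
          mul_le_mul (by linarith) hRi (integral_nonneg hR0) (by linarith)
      _ = ε / 4 := by field_simp
  linarith
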